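/- For every k ≥ N0 + 1 and every L with |p_{k−1}| + 2 ≤ L ≤ |p_k| + 1: C(L) = #A_ev·L − |p_{k−1}| + |p_{k−2}| if |p_{k−1}| + 2 ≤ L ≤ 2|p_{k−1}| − |p_{k−2}| + 1, and C(L) = (#A_ev − 1)·L + |p_{k−1}| + 1 if 2|p_{k−1}| − |p_{k−2}| + 2 ≤ L ≤ |p_k| + 1. -/

import Mathlib

/-!
Write `q_j = n_0 ⋯ n_{j-1} = |p_{j-1}| + 1` (`Qp`). All blocks are prefixes of one Toeplitz sequence
`tseq`, whose letter at `i ≥ 1` is `a_j` for the least `j` with `q_{j+1} ∤ i` (`block_eq`), so the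
language is its set of windows (`mem_lang_iff`).

Let `k = m + 1`. A window of length `L ≤ q_{k+1}` meets at most one multiple of `q_{k+1}`. It
therefore is a window of the periodic word `⋯ p_m a_k p_m a_k ⋯` in which the letter at one place `0`
has been replaced by some `b`; since `A_{k+1} = A_ev`, every `b ∈ A_ev` and every position of the
window relative to `0` occurs (`lang_eq`).

It remains to count coincidences. For `b = a_k` the word is periodic with minimal period `q_k`
(`yseq_minimal`), which gives `q_k` windows. The `L` windows for each of the other `#A_ev - 1`
letters `b` are never windows of the periodic word (`win_ne_periodic`), and are pairwise distinct
except for `b = a_m` (`win_modified_eq`): the stretch `p_m a_m p_m`, of length `2 q_k - 1`, has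
minimal period `q_m`, so its `2 q_k - L` windows yield only `q_m` distinct words. All these facts
rest on one remark: modulo `q_m`, every residue class other than that of `0` carries a constant
letter, whereas the class of `0` carries both `a_m` and `a_k ≠ a_m`. Hence
`C(L) = q_k + (#A_ev - 1) L - max(0, 2 q_k - q_m - L)` (`cmpl_eq`), and the two cases of the theorem
are the two cases of the maximum.
-/

open Filter

/-- The blocks `p k` of the simple Toeplitz subshift coded by `a` and `n`:
`p 0 = a 0 ^ (n 0 - 1)` and `p (k+1)` consists of `n (k+1)` copies of `p k`
separated by `n (k+1) - 1` single letters `a (k+1)`. -/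
def ToeplitzBlock {A : Type*} (a : ℕ → A) (n : ℕ → ℕ) : ℕ → List A
  | 0 => List.replicate (n 0 - 1) (a 0)
  | k + 1 => List.intercalate [a (k + 1)] (List.replicate (n (k + 1)) (ToeplitzBlock a n k))

/-- `lenPrev a n k = |p (k-1)|`, with the convention `|p (-1)| = 0`. -/
def lenPrev {A : Type*} (a : ℕ → A) (n : ℕ → ℕ) : ℕ → ℕ
  | 0 => 0
  | k + 1 => (ToeplitzBlock a n k).length

/-- The language of the simple Toeplitz subshift: all finite words occurring as a
factor of some block `p k`. -/
def ToeplitzLang {A : Type*} (a : ℕ → A) (n : ℕ → ℕ) : Set (List A) :=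
  {u | ∃ k, u <:+: ToeplitzBlock a n k}

/-- The complexity function `C L`. -/
noncomputable def cmpl {A : Type*} (a : ℕ → A) (n : ℕ → ℕ) (L : ℕ) : ℕ :=
  Set.ncard {u | u ∈ ToeplitzLang a n ∧ u.length = L}

/-- The palindrome complexity function `P L`. -/
noncomputable def palCmpl {A : Type*} (a : ℕ → A) (n : ℕ → ℕ) (L : ℕ) : ℕ :=
  Set.ncard {u | u ∈ ToeplitzLang a n ∧ u.length = L ∧ u.reverse = u}

/-- `Ak a k = {a j : j ≥ k}`. -/
def Ak {A : Type*} (a : ℕ → A) (k : ℕ) : Set A := {x | ∃ j, k ≤ j ∧ a j = x}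

/-- The eventual alphabet `A_ev = ⋂ k, A_k`. -/
def Aev {A : Type*} (a : ℕ → A) : Set A := ⋂ k, Ak a k

/-- `Kf a k = min {j > k : {a (k+1), …, a j} = A (k+1)}`. -/
noncomputable def Kf {A : Type*} (a : ℕ → A) (k : ℕ) : ℕ :=
  sInf {j | k < j ∧ {x | ∃ i, k + 1 ≤ i ∧ i ≤ j ∧ a i = x} = Ak a (k + 1)}

/-- The positions `m i` at which `Kf` increases: `m 0 = 0` and
`m (i+1) = min {j > m i : Kf j > Kf (m i)}`. -/
noncomputable def mseq {A : Type*} (a : ℕ → A) : ℕ → ℕ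
  | 0 => 0
  | i + 1 => sInf {j | mseq a i < j ∧ Kf a (mseq a i) < Kf a j}

/-- The repetitivity function `R L`: the least `L'` such that every word of
length `L` of the language is a factor of every word of length `L'`. -/
noncomputable def repet {A : Type*} (a : ℕ → A) (n : ℕ → ℕ) (L : ℕ) : ℕ :=
  sInf {L' | ∀ u ∈ ToeplitzLang a n, u.length = L →
    ∀ w ∈ ToeplitzLang a n, w.length = L' → u <:+: w}

section Toeplitz

variable {A : Type*}

/-- `Qp n j = n 0 * ⋯ * n (j-1) = |p (j-1)| + 1`, the period at level `j`. -/
def Qp (n : ℕ → ℕ) : ℕ → ℕ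
  | 0 => 1
  | j + 1 => n j * Qp n j

/-- The Toeplitz sequence on `ℤ`: the letter at `i` is `a j` for the least `j` such that
`n 0 * ⋯ * n j` does not divide `i`. The value at `0`, where no such `j` exists, is junk. -/
noncomputable def tseq (a : ℕ → A) (n : ℕ → ℕ) (i : ℤ) : A :=
  a (sInf {j | ¬ (Qp n (j + 1) : ℤ) ∣ i})

open Classical in
/-- The periodic word `⋯ p a_m p a_m ⋯` with `p = p (m-1)`, the letters `a m` sitting at the
multiples of `Qp n m`. -/
noncomputable def yseq (a : ℕ → A) (n : ℕ → ℕ) (m : ℕ) (i : ℤ) : A :=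
  if (Qp n m : ℤ) ∣ i then a m else tseq a n i

open Classical in
/-- The periodic word `yseq a n k` with its letter at `0` replaced by the letter `b`. -/
noncomputable def wseq (a : ℕ → A) (n : ℕ → ℕ) (k : ℕ) (b : A) (i : ℤ) : A :=
  if i = 0 then b else yseq a n k i

/-- The word of length `L` read off from `g` starting at position `s`. -/
def win (g : ℤ → A) (L : ℕ) (s : ℤ) : List A := (List.range L).map fun i : ℕ => g (s + (i : ℤ))

lemma win_eq_iff {g g' : ℤ → A} {L : ℕ} {s s' : ℤ} :
    win g L s = win g' L s' ↔ ∀ x, s ≤ x → x < s + L → g x = g' (x + (s' - s)) := by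
  unfold win
  rw [List.map_inj_left]
  constructor
  · intro h x h1 h2
    have := h (x - s).toNat (by rw [List.mem_range]; omega)
    rw [Int.toNat_of_nonneg (by omega)] at this
    convert this using 2 <;> ring
  · intro h i hi
    rw [List.mem_range] at hi
    rw [h (s + i) (by omega) (by omega)]
    congr 1; ring

/-! ### Divisibility structure of the Toeplitz sequence -/

lemma Qp_pos {n : ℕ → ℕ} (hn : ∀ k, 2 ≤ n k) (j : ℕ) : 0 < Qp n j := by
  induction j with
  | zero => simp [Qp]
  | succ j ih => exact Nat.mul_pos (by have := hn j; omega) ih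

lemma Qp_double {n : ℕ → ℕ} (hn : ∀ k, 2 ≤ n k) (j : ℕ) : 2 * Qp n j ≤ Qp n (j + 1) :=
  Nat.mul_le_mul_right _ (hn j)

lemma Qp_dvd (n : ℕ → ℕ) {i j : ℕ} (h : i ≤ j) : Qp n i ∣ Qp n j := by
  induction j, h using Nat.le_induction with
  | base => exact dvd_rfl
  | succ j _ ih => exact ih.trans (Dvd.intro_left _ rfl)

lemma Qp_dvd_int {n : ℕ → ℕ} {i j : ℕ} (h : i ≤ j) {x : ℤ} (hx : (Qp n j : ℤ) ∣ x) :
    (Qp n i : ℤ) ∣ x :=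
  (Int.natCast_dvd_natCast.2 (Qp_dvd n h)).trans hx

lemma lt_Qp {n : ℕ → ℕ} (hn : ∀ k, 2 ≤ n k) (j : ℕ) : j < Qp n j := by
  induction j with
  | zero => simp [Qp]
  | succ j ih => have := Qp_double hn j; omega

lemma tseq_eq (a : ℕ → A) {n : ℕ → ℕ} {j : ℕ} {i : ℤ} (h1 : (Qp n j : ℤ) ∣ i)
    (h2 : ¬ (Qp n (j + 1) : ℤ) ∣ i) : tseq a n i = a j := by
  unfold tseq
  congr 1
  apply le_antisymm
  · exact Nat.sInf_le h2
  · refine le_csInf ⟨j, h2⟩ fun l hl => ?_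
    by_contra hlt
    exact hl (Qp_dvd_int (by omega) h1)

/-- Every nonmultiple of `Qp n m` receives its letter at some level below `m`. -/
lemma exists_level {n : ℕ → ℕ} {m : ℕ} {i : ℤ} (h : ¬ (Qp n m : ℤ) ∣ i) :
    ∃ j < m, (Qp n j : ℤ) ∣ i ∧ ¬ (Qp n (j + 1) : ℤ) ∣ i := by
  induction m with
  | zero => simp [Qp] at h
  | succ m ih =>
    by_cases h' : (Qp n m : ℤ) ∣ i
    · exact ⟨m, by omega, h', h⟩
    · obtain ⟨j, hj, hh⟩ := ih h'
      exact ⟨j, by omega, hh⟩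

/-- Off the multiples of `Qp n m`, the Toeplitz sequence is `Qp n m`-periodic. -/
lemma tseq_congr (a : ℕ → A) {n : ℕ → ℕ} {m : ℕ} {x y : ℤ} (h : ¬ (Qp n m : ℤ) ∣ x)
    (hxy : (Qp n m : ℤ) ∣ y - x) : tseq a n x = tseq a n y := by
  obtain ⟨j, hj, h1, h2⟩ := exists_level h
  rw [tseq_eq a h1 h2, tseq_eq a]
  · have := Qp_dvd_int (n := n) (i := j) (by omega) hxy
    exact (dvd_iff_dvd_of_dvd_sub this).2 h1
  · have := Qp_dvd_int (n := n) (i := j + 1) (by omega) hxy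
    exact fun h' => h2 ((dvd_iff_dvd_of_dvd_sub this).1 h')

lemma yseq_self (a : ℕ → A) {n : ℕ → ℕ} {m : ℕ} {x : ℤ} (h : (Qp n m : ℤ) ∣ x) :
    yseq a n m x = a m := if_pos h

lemma yseq_prev (a : ℕ → A) {n : ℕ → ℕ} {m : ℕ} {x : ℤ} (h : (Qp n m : ℤ) ∣ x)
    (h' : ¬ (Qp n (m + 1) : ℤ) ∣ x) : yseq a n (m + 1) x = a m := by
  rw [yseq, if_neg h', tseq_eq a h h']

/-- Letters at positions off the multiples of `Qp n m` agree along residue classes. -/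
lemma yseq_class (a : ℕ → A) {n : ℕ → ℕ} {m : ℕ} {x y : ℤ} (h : ¬ (Qp n m : ℤ) ∣ x)
    (hxy : (Qp n m : ℤ) ∣ y - x) : yseq a n (m + 1) x = yseq a n (m + 1) y := by
  have h' : ¬ (Qp n m : ℤ) ∣ y := fun h' => h ((dvd_iff_dvd_of_dvd_sub hxy).1 h')
  rw [yseq, yseq, if_neg, if_neg, tseq_congr a h hxy]
  · exact fun h2 => h' (Qp_dvd_int (by omega) h2)
  · exact fun h2 => h (Qp_dvd_int (by omega) h2)

lemma yseq_periodic (a : ℕ → A) {n : ℕ → ℕ} {m : ℕ} {x y : ℤ}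
    (hxy : (Qp n m : ℤ) ∣ y - x) : yseq a n m x = yseq a n m y := by
  by_cases h : (Qp n m : ℤ) ∣ x
  · rw [yseq_self a h, yseq_self a ((dvd_iff_dvd_of_dvd_sub hxy).2 h)]
  · have h' : ¬ (Qp n m : ℤ) ∣ y := fun h' => h ((dvd_iff_dvd_of_dvd_sub hxy).1 h')
    rw [yseq, yseq, if_neg h, if_neg h', tseq_congr a h hxy]

/-- An interval of length `q` contains every residue class modulo `q`. -/
lemma exists_residue {q : ℕ} (hq : 0 < q) (s r : ℤ) :
    ∃ x, s ≤ x ∧ x < s + q ∧ (q : ℤ) ∣ x - r := by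
  refine ⟨s + (r - s) % q, ?_, ?_, ?_⟩
  · have := Int.emod_nonneg (r - s) (b := (q : ℤ)) (by omega); omega
  · have := Int.emod_lt_of_pos (r - s) (b := (q : ℤ)) (by omega); omega
  · have := Int.mul_ediv_add_emod (r - s) q
    exact ⟨-((r - s) / q), by linarith⟩

lemma not_Qp_dvd {n : ℕ → ℕ} (hn : ∀ k, 2 ≤ n k) (j : ℕ) :
    ¬ (Qp n (j + 1) : ℤ) ∣ (Qp n j : ℤ) := by
  rw [Int.natCast_dvd_natCast]
  intro h
  have := Nat.le_of_dvd (Qp_pos hn j) h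
  have := Qp_double hn j
  have := Qp_pos hn j
  omega

/-- `Qp n m` is the minimal period of `yseq a n m`, already visible on a window of length
`Qp n m`: at the level below, the class of `0` is the only nonconstant one. -/
lemma yseq_minimal {a : ℕ → A} {n : ℕ → ℕ} (hn : ∀ k, 2 ≤ n k) (ha : ∀ k, a k ≠ a (k + 1))
    (m L : ℕ) (hL : Qp n m ≤ L) (s d : ℤ)
    (h : ∀ x, s ≤ x → x < s + L → yseq a n m x = yseq a n m (x + d)) : (Qp n m : ℤ) ∣ d := by
  cases m with
  | zero => simp [Qp]
  | succ j =>
    obtain ⟨x0, h1, h2, h3⟩ := exists_residue (Qp_pos hn (j + 1)) s 0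
    obtain ⟨x1, h4, h5, h6⟩ := exists_residue (Qp_pos hn (j + 1)) s (Qp n j)
    rw [sub_zero] at h3
    have e0 := h x0 h1 (by omega)
    have e1 := h x1 h4 (by omega)
    have h1' : (Qp n j : ℤ) ∣ x1 :=
      (dvd_iff_dvd_of_dvd_sub (Qp_dvd_int (by omega) h6)).2 dvd_rfl
    have h1'' : ¬ (Qp n (j + 1) : ℤ) ∣ x1 := fun h' =>
      not_Qp_dvd hn j ((dvd_iff_dvd_of_dvd_sub h6).1 h')
    rw [yseq_self a h3] at e0
    rw [yseq_prev a h1' h1''] at e1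
    have h0' : (Qp n j : ℤ) ∣ x0 := Qp_dvd_int (by omega) h3
    by_contra hd
    by_cases hd' : (Qp n j : ℤ) ∣ d
    · rw [yseq_prev a (dvd_add h0' hd') (fun h' => hd ((dvd_add_right h3).1 h'))] at e0
      exact ha j e0.symm
    · have : yseq a n (j + 1) (x0 + d) = yseq a n (j + 1) (x1 + d) := by
        apply yseq_class a (fun h' => hd' ((dvd_add_right h0').1 h'))
        have : x1 + d - (x0 + d) = x1 - x0 := by ring
        rw [this]; exact dvd_sub h1' h0'
      exact ha j (by rw [e0, e1, this])

/-! ### Coincidences between windows with one modified letter -/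

lemma wseq_zero (a : ℕ → A) (n : ℕ → ℕ) (k : ℕ) (b : A) : wseq a n k b 0 = b := if_pos rfl

lemma wseq_ne (a : ℕ → A) (n : ℕ → ℕ) (k : ℕ) (b : A) {x : ℤ} (h : x ≠ 0) :
    wseq a n k b x = yseq a n k x := if_neg h

lemma wseq_self (a : ℕ → A) (n : ℕ → ℕ) (k : ℕ) : wseq a n k (a k) = yseq a n k := by
  funext x
  by_cases h : x = 0
  · subst h; rw [wseq_zero, yseq_self a (dvd_zero _)]
  · exact wseq_ne _ _ _ _ h

lemma wseq_class (a : ℕ → A) {n : ℕ → ℕ} {m : ℕ} (b b' : A) {x y : ℤ}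
    (h : ¬ (Qp n m : ℤ) ∣ x) (hxy : (Qp n m : ℤ) ∣ y - x) :
    wseq a n (m + 1) b x = wseq a n (m + 1) b' y := by
  have h' : ¬ (Qp n m : ℤ) ∣ y := fun h' => h ((dvd_iff_dvd_of_dvd_sub hxy).1 h')
  rw [wseq_ne, wseq_ne, yseq_class a h hxy]
  · rintro rfl; simp at h'
  · rintro rfl; simp at h

/-- Around a modified letter `a m`, the word `wseq` at level `m + 1` follows the periodic word of
level `m` until the next multiples of `Qp n (m + 1)`. -/
lemma wseq_prev (a : ℕ → A) {n : ℕ → ℕ} {m : ℕ} {x : ℤ} (h1 : -(Qp n (m + 1) : ℤ) < x)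
    (h2 : x < Qp n (m + 1)) : wseq a n (m + 1) (a m) x = yseq a n m x := by
  by_cases h : x = 0
  · subst h; rw [wseq_zero, yseq_self a (dvd_zero _)]
  · rw [wseq_ne _ _ _ _ h]
    have hx : ¬ (Qp n (m + 1) : ℤ) ∣ x := fun h' =>
      h (Int.eq_zero_of_abs_lt_dvd h' (abs_lt.2 ⟨h1, h2⟩))
    by_cases h' : (Qp n m : ℤ) ∣ x
    · rw [yseq_prev a h' hx, yseq_self a h']
    · rw [yseq, yseq, if_neg hx, if_neg h']

/-- If a window around a genuinely modified letter `b` matches a window shifted by `d`, where `d`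
is not a multiple of `Qp n m`, then the window stays between two multiples of `Qp n (m + 1)` and
`b = a m`: on it, the class of `0` modulo `Qp n m` has to be constant. -/
lemma wseq_const {a : ℕ → A} {n : ℕ → ℕ} (hn : ∀ k, 2 ≤ n k)
    {m L : ℕ} (hL : Qp n (m + 1) + 1 ≤ L) {b b' : A} (hb : b ≠ a (m + 1)) {s d : ℤ}
    (hs1 : s ≤ 0) (hs2 : 0 < s + L)
    (h : ∀ x, s ≤ x → x < s + L → wseq a n (m + 1) b x = wseq a n (m + 1) b' (x + d))
    (hd : ¬ (Qp n m : ℤ) ∣ d) :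
    b = a m ∧ -(Qp n (m + 1) : ℤ) < s ∧ s + L ≤ Qp n (m + 1) := by
  have hq := Qp_pos hn (m + 1)
  have hq' := Qp_pos hn m
  have h2q := Qp_double hn m
  have key : ∀ x, s ≤ x → x < s + L → (Qp n m : ℤ) ∣ x → wseq a n (m + 1) b x = b := by
    intro x h1 h2 h3
    have e0 := h 0 hs1 (by omega)
    rw [wseq_zero] at e0
    refine Eq.trans ?_ e0.symm
    rw [h x h1 h2, eq_comm]
    apply wseq_class a _ _ (by simpa using hd)
    have : x + d - (0 + d) = x := by ring
    rwa [this]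
  have hm : (Qp n m : ℤ) ∣ (Qp n (m + 1) : ℤ) := Qp_dvd_int (by omega) dvd_rfl
  have l1 : -(Qp n (m + 1) : ℤ) < s := by
    by_contra hc
    have := key (-(Qp n (m + 1) : ℤ)) (by omega) (by omega) (by simpa using hm)
    rw [wseq_ne _ _ _ _ (by omega), yseq_self a (by simp)] at this
    exact hb this.symm
  have l2 : s + L ≤ Qp n (m + 1) := by
    by_contra hc
    have := key (Qp n (m + 1) : ℤ) (by omega) (by omega) hm
    rw [wseq_ne _ _ _ _ (by omega), yseq_self a (by simp)] at this
    exact hb this.symm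
  refine ⟨?_, l1, l2⟩
  by_cases hc : (Qp n m : ℤ) < s + L
  · have := key (Qp n m : ℤ) (by omega) (by omega) dvd_rfl
    rw [wseq_ne _ _ _ _ (by omega), yseq_prev a dvd_rfl (not_Qp_dvd hn m)] at this
    exact this.symm
  · have := key (-(Qp n m : ℤ)) (by omega) (by omega) (by simp)
    rw [wseq_ne _ _ _ _ (by omega), yseq_prev a (by simp)
      (by rw [dvd_neg]; exact not_Qp_dvd hn m)] at this
    exact this.symm

/-- A window around a modified letter differs from all windows of the unmodified periodic word. -/
lemma win_ne_periodic {a : ℕ → A} {n : ℕ → ℕ} (hn : ∀ k, 2 ≤ n k) (ha : ∀ k, a k ≠ a (k + 1))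
    {m L : ℕ} (hL : Qp n (m + 1) + 1 ≤ L) {b : A} (hb : b ≠ a (m + 1)) {s s' : ℤ}
    (hs1 : s ≤ 0) (hs2 : 0 < s + L) :
    win (wseq a n (m + 1) b) L s ≠ win (wseq a n (m + 1) (a (m + 1))) L s' := by
  intro h
  rw [win_eq_iff] at h
  generalize s' - s = d at h
  have hq := Qp_pos hn (m + 1)
  by_cases hd : (Qp n m : ℤ) ∣ d
  · have e0 := h 0 hs1 (by omega)
    rw [wseq_zero, zero_add, wseq_self] at e0
    by_cases hd' : (Qp n (m + 1) : ℤ) ∣ d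
    · rw [yseq_self a hd'] at e0; exact hb e0
    · rw [yseq_prev a hd hd'] at e0
      obtain ⟨x, h1, h2, h3⟩ := exists_residue (Qp_pos hn (m + 1)) s (-d)
      rw [sub_neg_eq_add] at h3
      have e1 := h x h1 (by omega)
      have hx : ¬ (Qp n (m + 1) : ℤ) ∣ x := fun h' => hd' ((dvd_add_right h').1 h3)
      rw [wseq_ne _ _ _ _ (by rintro rfl; simp at hx), wseq_self, yseq_self a h3,
        yseq_prev a ((dvd_add_left hd).1 (Qp_dvd_int (by omega) h3)) hx] at e1
      exact ha m e1
  · obtain ⟨rfl, l1, l2⟩ := wseq_const hn hL hb hs1 hs2 h hd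
    -- The shifted window is long enough to contain both kinds of multiples of `Qp n m`.
    obtain ⟨x0, h1, h2, h3⟩ := exists_residue (Qp_pos hn (m + 1)) s (-d)
    obtain ⟨x1, h4, h5, h6⟩ := exists_residue (Qp_pos hn (m + 1)) s (Qp n m - d)
    have e0 := h x0 h1 (by omega)
    have e1 := h x1 h4 (by omega)
    have h3' : (Qp n (m + 1) : ℤ) ∣ x0 + d := by convert h3 using 1; ring
    have h6' : (Qp n (m + 1) : ℤ) ∣ (x1 + d) - Qp n m := by convert h6 using 1; ring
    have h1' : (Qp n m : ℤ) ∣ x1 + d :=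
      (dvd_iff_dvd_of_dvd_sub (Qp_dvd_int (by omega) h6')).2 dvd_rfl
    have h1'' : ¬ (Qp n (m + 1) : ℤ) ∣ x1 + d := fun h' =>
      not_Qp_dvd hn m ((dvd_iff_dvd_of_dvd_sub h6').1 h')
    have h0' : (Qp n m : ℤ) ∣ x0 + d := Qp_dvd_int (by omega) h3'
    rw [wseq_self, yseq_self a h3'] at e0
    rw [wseq_self, yseq_prev a h1' h1''] at e1
    have : wseq a n (m + 1) (a m) x0 = wseq a n (m + 1) (a m) x1 := by
      apply wseq_class a _ _ (fun h' => hd ((dvd_add_right h').1 h0'))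
      have : x1 - x0 = (x1 + d) - (x0 + d) := by ring
      rw [this]; exact dvd_sub h1' h0'
    exact ha m (e1.symm.trans (this.symm.trans e0))

/-- Two windows around modified letters coincide only trivially, or when the letter is `a m` and
both lie in the stretch `p a_m p` of smaller period `Qp n m`. -/
lemma win_modified_eq {a : ℕ → A} {n : ℕ → ℕ} (hn : ∀ k, 2 ≤ n k) (ha : ∀ k, a k ≠ a (k + 1))
    {m L : ℕ} (hL : Qp n (m + 1) + 1 ≤ L) {b b' : A} (hb : b ≠ a (m + 1)) (hb' : b' ≠ a (m + 1))
    {s s' : ℤ} (hs1 : s ≤ 0) (hs2 : 0 < s + L) (hs1' : s' ≤ 0) (hs2' : 0 < s' + L)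
    (h : win (wseq a n (m + 1) b) L s = win (wseq a n (m + 1) b') L s') :
    b = b' ∧ (s = s' ∨ b = a m ∧ (Qp n m : ℤ) ∣ s' - s ∧
      (-(Qp n (m + 1) : ℤ) < s ∧ s + L ≤ Qp n (m + 1)) ∧
      (-(Qp n (m + 1) : ℤ) < s' ∧ s' + L ≤ Qp n (m + 1))) := by
  have hr := win_eq_iff.1 h.symm
  rw [win_eq_iff] at h
  have hq := Qp_pos hn (m + 1)
  obtain ⟨d, hd⟩ : ∃ d, d = s' - s := ⟨_, rfl⟩
  have hds : s - s' = -d := by omega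
  rw [← hd] at h ⊢
  rw [hds] at hr
  have e0 := h 0 hs1 (by omega)
  have e1 := h (-d) (by omega) (by omega)
  rw [wseq_zero, zero_add] at e0
  rw [neg_add_cancel, wseq_zero] at e1
  by_cases hd0 : d = 0
  · subst hd0
    rw [wseq_zero] at e0
    exact ⟨e0, Or.inl (by omega)⟩
  rw [wseq_ne _ _ _ _ hd0] at e0
  rw [wseq_ne _ _ _ _ (by omega)] at e1
  have hdq : ¬ (Qp n (m + 1) : ℤ) ∣ d := by
    intro h'; rw [yseq_self a h'] at e0; exact hb e0
  by_cases hdm : (Qp n m : ℤ) ∣ d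
  · rw [yseq_prev a hdm hdq] at e0
    rw [yseq_prev a (by simpa using hdm) (by simpa using hdq)] at e1
    subst e0; subst e1
    -- A multiple of `Qp n (m + 1)` other than `0` in one window carries `a (m + 1)`, while the
    -- matching position in the other window carries `a m`.
    have aux : ∀ (t e : ℤ), (Qp n m : ℤ) ∣ e → ¬ (Qp n (m + 1) : ℤ) ∣ e →
        (∀ x, t ≤ x → x < t + L → wseq a n (m + 1) (a m) x = wseq a n (m + 1) (a m) (x + e)) →
        t ≤ 0 → 0 < t + L → (-(Qp n (m + 1) : ℤ) < t ∧ t + L ≤ Qp n (m + 1)) := by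
      intro t e he he' ht h1 h2
      have hmm : (Qp n m : ℤ) ∣ (Qp n (m + 1) : ℤ) := Qp_dvd_int (by omega) dvd_rfl
      have key : ∀ x, t ≤ x → x < t + L → (Qp n (m + 1) : ℤ) ∣ x → x = 0 := by
        intro x h3 h4 h5
        by_contra hx
        have := ht x h3 h4
        have h6 : ¬ (Qp n (m + 1) : ℤ) ∣ x + e := fun h' => he' ((dvd_add_right h5).1 h')
        rw [wseq_ne _ _ _ _ hx, yseq_self a h5, wseq_ne _ _ _ _ (by rintro h; simp [h] at h6),
          yseq_prev a (dvd_add (hmm.trans h5) he) h6] at this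
        exact ha m this.symm
      constructor
      · by_contra hc
        have := key (-(Qp n (m + 1) : ℤ)) (by omega) (by omega) (by simp)
        omega
      · by_contra hc
        have := key (Qp n (m + 1) : ℤ) (by omega) (by omega) (by simp)
        omega
    exact ⟨rfl, Or.inr ⟨rfl, hdm, aux s d hdm hdq h hs1 hs2,
      aux s' (-d) (by simpa using hdm) (by simpa using hdq) hr hs1' hs2'⟩⟩
  · exfalso
    obtain ⟨rfl, l1, l2⟩ := wseq_const hn hL hb hs1 hs2 h hdm
    obtain ⟨rfl, l1', l2'⟩ := wseq_const hn hL hb' hs1' hs2' hr (by simpa using hdm)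
    refine hdm (yseq_minimal hn ha m L (by have := Qp_double hn m; omega) s d fun x h1 h2 => ?_)
    rw [← wseq_prev a (by omega) (by omega), h x h1 h2, wseq_prev a (by omega) (by omega)]

/-! ### The language as a set of windows -/

lemma intercalate_append (c : A) (P : List A) (r : ℕ) :
    List.intercalate [c] (List.replicate (r + 1) P) ++ [c]
      = (List.replicate (r + 1) (P ++ [c])).flatten := by
  induction r with
  | zero => simp [List.intercalate]
  | succ r ih =>
    rw [List.replicate_succ, List.replicate_succ (n := r + 1), List.flatten_cons, ← ih,
      List.replicate_succ]
    simp [List.intercalate, List.append_assoc]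

lemma map_range_periodic (f : ℕ → A) (q r : ℕ) (hf : ∀ i, f (q + i) = f i) :
    (List.range (r * q)).map f = (List.replicate r ((List.range q).map f)).flatten := by
  induction r with
  | zero => simp
  | succ r ih =>
    rw [add_mul, one_mul, add_comm, List.range_add, List.replicate_succ, List.flatten_cons, ← ih]
    simp [Function.comp_def, hf]

lemma tseq_eq_yseq (a : ℕ → A) {n : ℕ → ℕ} {m : ℕ} {x : ℤ} (h : ¬ (Qp n (m + 1) : ℤ) ∣ x) :
    tseq a n x = yseq a n m x := by
  by_cases h' : (Qp n m : ℤ) ∣ x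
  · rw [yseq_self a h', tseq_eq a h' h]
  · rw [yseq, if_neg h']

lemma block_eq {a : ℕ → A} {n : ℕ → ℕ} (hn : ∀ k, 2 ≤ n k) (j : ℕ) :
    ToeplitzBlock a n j = win (tseq a n) (Qp n (j + 1) - 1) 1 := by
  -- The block is compared with the periodic word of the same level, on which it is a window.
  have conv : ∀ j, win (tseq a n) (Qp n (j + 1) - 1) 1
      = win (yseq a n j) (Qp n (j + 1) - 1) 1 := by
    intro j
    rw [win_eq_iff]
    intro x h1 h2
    rw [sub_self, add_zero]
    refine tseq_eq_yseq a fun h => ?_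
    have := Int.le_of_dvd (by omega) h
    omega
  have last : ∀ (g : ℤ → A) (N : ℕ), 0 < N → win g N 1 = win g (N - 1) 1 ++ [g N] := by
    intro g N hN
    obtain ⟨M, rfl⟩ : ∃ M, N = M + 1 := ⟨N - 1, by omega⟩
    simp [win, List.range_succ, add_comm]
  induction j with
  | zero =>
    rw [conv]
    have : ∀ x, yseq a n 0 x = a 0 := fun x => yseq_self a (by simp [Qp])
    simp [ToeplitzBlock, win, this, Qp]
  | succ j ih =>
    have hq := Qp_pos hn (j + 1)
    have hq2 := Qp_pos hn (j + 2)
    have e1 : ToeplitzBlock a n j ++ [a (j + 1)] = win (yseq a n (j + 1)) (Qp n (j + 1)) 1 := by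
      rw [last _ _ hq, yseq_self a dvd_rfl, ih]
      congr 1
      rw [win_eq_iff]
      intro x h1 h2
      rw [sub_self, add_zero, yseq, if_neg]
      intro h
      have := Int.le_of_dvd (by omega) h
      omega
    have e2 : ToeplitzBlock a n (j + 1) ++ [a (j + 1)]
        = win (yseq a n (j + 1)) (Qp n (j + 2)) 1 := by
      obtain ⟨r, hr⟩ : ∃ r, n (j + 1) = r + 1 := ⟨n (j + 1) - 1, by have := hn (j + 1); omega⟩
      rw [ToeplitzBlock, hr, intercalate_append, e1, show Qp n (j + 2) = (r + 1) * Qp n (j + 1) by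
        rw [← hr]; rfl]
      unfold win
      rw [map_range_periodic]
      intro i
      apply yseq_periodic
      exact ⟨-1, by push_cast; ring⟩
    rw [last _ _ hq2, yseq_self a (Qp_dvd_int (by omega) dvd_rfl)] at e2
    rw [conv]
    exact List.append_cancel_right e2

lemma win_append (g : ℤ → A) (M N : ℕ) (s : ℤ) :
    win g (M + N) s = win g M s ++ win g N (s + M) := by
  simp [win, List.range_add, Function.comp_def, add_assoc]

lemma mem_lang_iff {a : ℕ → A} {n : ℕ → ℕ} (hn : ∀ k, 2 ≤ n k) (L : ℕ) (u : List A) :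
    u ∈ ToeplitzLang a n ∧ u.length = L ↔ ∃ s : ℤ, 1 ≤ s ∧ u = win (tseq a n) L s := by
  constructor
  · rintro ⟨⟨j, v, w, h⟩, rfl⟩
    rw [block_eq hn] at h
    refine ⟨1 + v.length, by omega, ?_⟩
    have hlen := congrArg List.length h
    simp only [List.length_append, win, List.length_map, List.length_range] at hlen
    rw [← hlen, win_append, win_append] at h
    have h1 := List.append_inj_left h (by simp [win])
    exact List.append_inj_right h1 (by simp [win])
  · rintro ⟨s, hs, rfl⟩
    refine ⟨⟨s.toNat + L, ?_⟩, by simp [win]⟩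
    rw [block_eq hn]
    have := lt_Qp hn (s.toNat + L + 1)
    obtain ⟨M, hM⟩ : ∃ M, Qp n (s.toNat + L + 1) - 1 = (s.toNat - 1) + L + M :=
      ⟨Qp n (s.toNat + L + 1) - 1 - ((s.toNat - 1) + L), by omega⟩
    rw [hM, win_append, win_append]
    have : (1 : ℤ) + ((s.toNat - 1 : ℕ) : ℤ) = s := by omega
    rw [this]
    exact ⟨_, _, rfl⟩

/-- The words of length `L ≤ Qp n (k + 1)` are the windows containing position `0` of the periodic
word at level `k` with the letter at `0` replaced by a letter of `Aev a`: a window of that length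
meets at most one multiple of `Qp n (k + 1)`. -/
lemma lang_eq {a : ℕ → A} {n : ℕ → ℕ} (hn : ∀ k, 2 ≤ n k) {k L : ℕ} (hL1 : Qp n k + 1 ≤ L)
    (hL2 : L ≤ Qp n (k + 1)) (hk : Ak a k = Aev a) (hk1 : Ak a (k + 1) = Aev a) (u : List A) :
    u ∈ ToeplitzLang a n ∧ u.length = L ↔
      ∃ b ∈ Aev a, ∃ s : ℤ, -L < s ∧ s ≤ 0 ∧ u = win (wseq a n k b) L s := by
  rw [mem_lang_iff hn]
  have hq := Qp_pos hn k
  have hq1 := Qp_pos hn (k + 1)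
  have hdvd : (Qp n k : ℤ) ∣ (Qp n (k + 1) : ℤ) := Qp_dvd_int (by omega) dvd_rfl
  -- Near a multiple `t` of `Qp n (k + 1)` the Toeplitz sequence is a shift of `wseq`.
  have shift : ∀ (t s : ℤ), (Qp n (k + 1) : ℤ) ∣ t → -L < s - t → s - t ≤ 0 →
      win (tseq a n) L s = win (wseq a n k (tseq a n t)) L (s - t) := by
    intro t s ht h1 h2
    rw [win_eq_iff]
    intro x h3 h4
    have : x + (s - t - s) = x - t := by ring
    rw [this]
    by_cases hx : x - t = 0
    · rw [hx, wseq_zero, show x = t by omega]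
    · rw [wseq_ne _ _ _ _ hx]
      have hx' : ¬ (Qp n (k + 1) : ℤ) ∣ x := by
        intro h
        exact hx (Int.eq_zero_of_abs_lt_dvd (dvd_sub h ht) (abs_lt.2 ⟨by omega, by omega⟩))
      rw [tseq_eq_yseq a hx']
      apply yseq_periodic
      have : x - t - x = -t := by ring
      rw [this, dvd_neg]
      exact hdvd.trans ht
  constructor
  · rintro ⟨s, hs, rfl⟩
    by_cases hc : ∃ t, s ≤ t ∧ t < s + L ∧ (Qp n (k + 1) : ℤ) ∣ t
    · obtain ⟨t, h1, h2, h3⟩ := hc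
      refine ⟨tseq a n t, ?_, s - t, by omega, by omega, shift t s h3 (by omega) (by omega)⟩
      have : ¬ (Qp n t.toNat : ℤ) ∣ t := by
        intro h
        have := Int.le_of_dvd (by omega) h
        have := lt_Qp hn t.toNat
        omega
      obtain ⟨j, -, h4, h5⟩ := exists_level this
      rw [tseq_eq a h4 h5, ← hk1]
      refine ⟨j, ?_, rfl⟩
      by_contra hj
      exact h5 (Qp_dvd_int (by omega) h3)
    · obtain ⟨s', h1, h2, h3⟩ := exists_residue hq (-(Qp n k : ℤ) + 1) s
      refine ⟨a k, hk ▸ ⟨k, le_rfl, rfl⟩, s', by omega, by omega, ?_⟩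
      rw [wseq_self, win_eq_iff]
      intro x h4 h5
      rw [tseq_eq_yseq a fun h => hc ⟨x, h4, h5, h⟩]
      apply yseq_periodic
      have : x + (s' - s) - x = s' - s := by ring
      rwa [this]
  · rintro ⟨b, hb, s, h1, h2, rfl⟩
    rw [← hk1] at hb
    obtain ⟨j, hj, rfl⟩ := hb
    have hle : Qp n (k + 1) ≤ Qp n j := Nat.le_of_dvd (Qp_pos hn j) (Qp_dvd n hj)
    refine ⟨Qp n j + s, by omega, ?_⟩
    rw [shift (Qp n j) _ (Qp_dvd_int hj dvd_rfl) (by omega) (by omega),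
      tseq_eq a dvd_rfl (not_Qp_dvd hn j)]
    congr 1; ring

lemma win_periodic_eq (a : ℕ → A) {n : ℕ → ℕ} {k L : ℕ} {s s' : ℤ}
    (h : (Qp n k : ℤ) ∣ s' - s) : win (yseq a n k) L s = win (yseq a n k) L s' := by
  rw [win_eq_iff]
  intro x _ _
  exact yseq_periodic a (by simpa using h)

/-! ### Counting -/

/-- Both regimes of the complexity at once: the `toNat` term counts the repeated windows inside
`p a_m p` and vanishes when these windows are too long to repeat. -/
lemma cmpl_eq [Fintype A] {a : ℕ → A} {n : ℕ → ℕ} (hn : ∀ k, 2 ≤ n k)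
    (ha : ∀ k, a k ≠ a (k + 1)) {m L : ℕ} (hL1 : Qp n (m + 1) + 1 ≤ L)
    (hL2 : L ≤ Qp n (m + 2)) (hm : Ak a m = Aev a) (hk : Ak a (m + 1) = Aev a)
    (hk1 : Ak a (m + 2) = Aev a) :
    (cmpl a n L : ℤ) = Qp n (m + 1) + ((Aev a).ncard - 1) * L
      - ((2 * Qp n (m + 1) - Qp n m - L : ℤ).toNat : ℤ) := by
  classical
  have hq := Qp_pos hn (m + 1)
  have hq' := Qp_pos hn m
  have h2q := Qp_double hn m
  have hmE : a m ∈ (Aev a).toFinset := by rw [Set.mem_toFinset, ← hm]; exact ⟨m, le_rfl, rfl⟩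
  have hkE : a (m + 1) ∈ (Aev a).toFinset := by
    rw [Set.mem_toFinset, ← hk]; exact ⟨m + 1, le_rfl, rfl⟩
  -- Representatives: one full period of windows of the unmodified word, and all windows around
  -- modified letters except the repetitions inside `p a_m p`.
  let R1 : Finset (A × ℤ) := {a (m + 1)} ×ˢ Finset.Ioc (-(Qp n (m + 1) : ℤ)) 0
  let R2 : Finset (A × ℤ) := ((Aev a).toFinset.erase (a (m + 1))) ×ˢ Finset.Ioc (-(L : ℤ)) 0
  let D : Finset (A × ℤ) :=
    {a m} ×ˢ Finset.Icc (-(Qp n (m + 1) : ℤ) + Qp n m + 1) (Qp n (m + 1) - L)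
  let F : A × ℤ → List A := fun x => win (wseq a n (m + 1) x.1) L x.2
  have hDR : D ⊆ R2 := by
    rintro ⟨b, s⟩ h
    simp only [D, R2, Finset.mem_product, Finset.mem_singleton, Finset.mem_Icc, Finset.mem_erase,
      Finset.mem_Ioc] at h ⊢
    obtain ⟨rfl, h1, h2⟩ := h
    exact ⟨⟨ha m, hmE⟩, by omega, by omega⟩
  have hdisj : Disjoint R1 (R2 \ D) := by
    rw [Finset.disjoint_left]
    rintro ⟨b, s⟩ h h'
    simp only [R1, R2, Finset.mem_product, Finset.mem_singleton, Finset.mem_sdiff,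
      Finset.mem_erase] at h h'
    exact h'.1.1.1 h.1
  have himg : {u | u ∈ ToeplitzLang a n ∧ u.length = L} =
      F '' ((R1 ∪ (R2 \ D) : Finset _) : Set _) := by
    ext u
    rw [Set.mem_ofPred_eq, lang_eq hn hL1 hL2 hk hk1]
    constructor
    · rintro ⟨b, hb, s, h1, h2, rfl⟩
      by_cases hbk : b = a (m + 1)
      · subst hbk
        obtain ⟨s', h3, h4, h5⟩ := exists_residue hq (-(Qp n (m + 1) : ℤ) + 1) s
        refine ⟨(a (m + 1), s'), ?_, ?_⟩
        · simp only [R1, Finset.coe_union, Set.mem_union, Finset.mem_coe, Finset.mem_product,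
            Finset.mem_singleton, Finset.mem_Ioc]
          exact Or.inl ⟨trivial, by omega, by omega⟩
        · simp only [F, wseq_self]
          exact (win_periodic_eq a h5).symm
      · have hR2 : (b, s) ∈ R2 := by
          simp only [R2, Finset.mem_product, Finset.mem_erase, Finset.mem_Ioc, Set.mem_toFinset]
          exact ⟨⟨hbk, hb⟩, h1, h2⟩
        by_cases hD : (b, s) ∈ D
        · simp only [D, Finset.mem_product, Finset.mem_singleton, Finset.mem_Icc] at hD
          obtain ⟨rfl, h3, h4⟩ := hD
          obtain ⟨s', h5, h6, h7⟩ := exists_residue hq' (-(Qp n (m + 1) : ℤ) + 1) s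
          refine ⟨(a m, s'), ?_, ?_⟩
          · simp only [R2, D, Finset.coe_union, Set.mem_union, Finset.mem_coe, Finset.mem_product,
              Finset.mem_singleton, Finset.mem_Ioc, Finset.mem_sdiff, Finset.mem_Icc,
              Finset.mem_erase]
            exact Or.inr ⟨⟨⟨ha m, hmE⟩, by omega, by omega⟩, by rintro ⟨-, h8, -⟩; omega⟩
          · have e : ∀ t : ℤ, -(Qp n (m + 1) : ℤ) < t → t + L ≤ Qp n (m + 1) →
                win (wseq a n (m + 1) (a m)) L t = win (yseq a n m) L t := by
              intro t h8 h9
              rw [win_eq_iff]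
              intro x h10 h11
              rw [sub_self, add_zero, wseq_prev a (by omega) (by omega)]
            simp only [F]
            rw [e s' (by omega) (by omega), e s (by omega) (by omega)]
            exact (win_periodic_eq a h7).symm
        · exact ⟨(b, s), Finset.mem_coe.2 (Finset.mem_union_right _ (Finset.mem_sdiff.2 ⟨hR2, hD⟩)),
            rfl⟩
    · rintro ⟨⟨b, s⟩, h, rfl⟩
      simp only [R1, R2, Finset.coe_union, Set.mem_union, Finset.mem_coe, Finset.mem_product,
        Finset.mem_singleton, Finset.mem_Ioc, Finset.mem_sdiff, Finset.mem_erase] at h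
      rcases h with ⟨rfl, h1, h2⟩ | ⟨⟨⟨_, hb⟩, h1, h2⟩, _⟩
      · exact ⟨_, Set.mem_toFinset.1 hkE, s, by omega, by omega, rfl⟩
      · exact ⟨_, Set.mem_toFinset.1 hb, s, by omega, by omega, rfl⟩
  have hinj : Set.InjOn F ((R1 ∪ (R2 \ D) : Finset _) : Set _) := by
    rintro ⟨b, s⟩ h ⟨b', s'⟩ h' he
    simp only [R1, R2, D, Finset.coe_union, Set.mem_union, Finset.mem_coe, Finset.mem_product,
      Finset.mem_singleton, Finset.mem_Ioc, Finset.mem_sdiff, Finset.mem_erase,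
      Finset.mem_Icc, not_and] at h h'
    simp only [F] at he
    rcases h with ⟨rfl, h1, h2⟩ | ⟨⟨⟨hb, -⟩, h1, h2⟩, h3⟩ <;>
    rcases h' with ⟨rfl, h1', h2'⟩ | ⟨⟨⟨hb', -⟩, h1', h2'⟩, h3'⟩
    · rw [wseq_self, win_eq_iff] at he
      have := yseq_minimal hn ha (m + 1) L (by omega) s (s' - s) he
      have := Int.eq_zero_of_abs_lt_dvd this (abs_lt.2 ⟨by omega, by omega⟩)
      rw [show s = s' by omega]
    · exact absurd he.symm (win_ne_periodic hn ha hL1 hb' (by omega) (by omega))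
    · exact absurd he (win_ne_periodic hn ha hL1 hb (by omega) (by omega))
    · obtain ⟨rfl, rfl | ⟨rfl, hd, hs, hs'⟩⟩ := win_modified_eq hn ha hL1 hb hb' (by omega)
        (by omega) (by omega) (by omega) he
      · rfl
      · have g1 : s ≤ -(Qp n (m + 1) : ℤ) + Qp n m := by
          by_contra hc
          exact h3 rfl (by omega) (by omega)
        have g2 : s' ≤ -(Qp n (m + 1) : ℤ) + Qp n m := by
          by_contra hc
          exact h3' rfl (by omega) (by omega)
        have := Int.eq_zero_of_abs_lt_dvd hd (abs_lt.2 ⟨by omega, by omega⟩)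
        rw [show s = s' by omega]
  have hcard1 : R1.card = Qp n (m + 1) := by simp [R1]
  have hcard2 : (R2.card : ℤ) = ((Aev a).ncard - 1) * L := by
    have hpos : 0 < (Aev a).toFinset.card := Finset.card_pos.2 ⟨_, hmE⟩
    simp only [R2, Finset.card_product, Finset.card_erase_of_mem hkE, Int.card_Ioc,
      Set.ncard_eq_toFinset_card']
    push_cast [Nat.cast_sub (show 1 ≤ (Aev a).toFinset.card from hpos)]
    congr 1
    omega
  have hcardD : D.card = (2 * Qp n (m + 1) - Qp n m - L : ℤ).toNat := by
    simp only [D, Finset.card_product, Finset.card_singleton, one_mul, Int.card_Icc]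
    congr 1; ring
  rw [cmpl, himg, hinj.ncard_image, Set.ncard_coe_finset,
    Finset.card_union_of_disjoint hdisj, Finset.card_sdiff_of_subset hDR]
  push_cast [Nat.cast_sub (Finset.card_le_card hDR)]
  rw [hcard1, hcard2, hcardD]
  ring

lemma lenPrev_eq {a : ℕ → A} {n : ℕ → ℕ} (hn : ∀ k, 2 ≤ n k) (j : ℕ) :
    lenPrev a n j + 1 = Qp n j := by
  cases j with
  | zero => rfl
  | succ j =>
    have := Qp_pos hn (j + 1)
    rw [lenPrev, block_eq hn]
    simp only [win, List.length_map, List.length_range]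
    omega

end Toeplitz

/-- the complexity function for `k ≥ N0 + 1` on the range
`|p (k-1)| + 2 ≤ L ≤ |p k| + 1`. -/
theorem stmt10 {A : Type*} [Fintype A] [Nonempty A]
    (a : ℕ → A) (n : ℕ → ℕ) (hn : ∀ k, 2 ≤ n k) (ha : ∀ k, a k ≠ a (k + 1))
    (hAev : 2 ≤ (Aev a).ncard)
    (N0 : ℕ) (hN0 : IsLeast {N | ∀ k, N ≤ k → Ak a k = Aev a} N0)
    (k : ℕ) (hk : N0 + 1 ≤ k) (L : ℕ)
    (hL1 : lenPrev a n k + 2 ≤ L) (hL2 : L ≤ (ToeplitzBlock a n k).length + 1) :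
    (L + lenPrev a n (k - 1) ≤ 2 * lenPrev a n k + 1 →
      (cmpl a n L : ℤ) =
        ((Aev a).ncard : ℤ) * (L : ℤ) - (lenPrev a n k : ℤ) + (lenPrev a n (k - 1) : ℤ)) ∧
    (2 * lenPrev a n k + 2 ≤ L + lenPrev a n (k - 1) →
      (cmpl a n L : ℤ) =
        (((Aev a).ncard : ℤ) - 1) * (L : ℤ) + (lenPrev a n k : ℤ) + 1) := by
  have hge : ∀ j, N0 ≤ j → Ak a j = Aev a := hN0.1
  obtain ⟨m, rfl⟩ : ∃ m, k = m + 1 := ⟨k - 1, by omega⟩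
  have e1 := lenPrev_eq (a := a) hn (m + 1)
  have e0 := lenPrev_eq (a := a) hn m
  have e2 : (ToeplitzBlock a n (m + 1)).length + 1 = Qp n (m + 2) :=
    lenPrev_eq (a := a) hn (m + 2)
  have key := cmpl_eq hn ha (m := m) (L := L) (by omega) (by omega) (hge m (by omega))
    (hge (m + 1) (by omega)) (hge (m + 2) (by omega))
  rw [key, Nat.add_sub_cancel, sub_one_mul]
  rw [← e1, ← e0]
  generalize ((Aev a).ncard : ℤ) * (L : ℤ) = c
  constructor <;> intro h <;> omega
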